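/- For the Bernstein case with all weights 1, 1 − h_k = (h_k/h_{k-1}) · (k(1−t))/(t(n−k+1)) for 1 ≤ k ≤ n and t ∈ (0,1), where h_k := B^n_k(t)/Σ_{j≤k} B^n_j(t). -/

import Mathlib

open Finset

/-- The Bernstein polynomial `B^n_k` evaluated at `t`. -/
def bern (n k : ℕ) (t : ℝ) : ℝ := (n.choose k : ℝ) * t ^ k * (1 - t) ^ (n - k)

/-!
For any sequence `b` with partial sums `S_k` and ratios `h_k = b_k / S_k`, both `1 - h_k` and
`(h_k / h_{k-1}) * (b_{k-1} / b_k)` equal `S_{k-1} / S_k`. For the Bernstein basis `b_{k-1} / b_k`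
is rational in `t`, because `k * C(n, k) = (n - k + 1) * C(n, k - 1)`.
-/

section LastTermRatio

variable {K : Type*} [Field K] {b : ℕ → K} {k : ℕ}

/-- The proportion `h_k = b_k / (b_0 + ⋯ + b_k)` of a partial sum contributed by its last term,
for an arbitrary sequence `b`. It has the junk value `0` when the partial sum vanishes. -/
def lastTermRatio (b : ℕ → K) (k : ℕ) : K := b k / ∑ j ∈ range (k + 1), b j

theorem lastTermRatio_ne_zero_iff :
    lastTermRatio b k ≠ 0 ↔ b k ≠ 0 ∧ ∑ j ∈ range (k + 1), b j ≠ 0 :=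
  div_ne_zero_iff

theorem one_sub_lastTermRatio (hS : ∑ j ∈ range (k + 1), b j ≠ 0) :
    1 - lastTermRatio b k = (∑ j ∈ range k, b j) / ∑ j ∈ range (k + 1), b j := by
  rw [lastTermRatio, one_sub_div hS, sum_range_succ, add_sub_cancel_right]

theorem one_sub_lastTermRatio_succ (hb : b k ≠ 0) (hr : lastTermRatio b (k + 1) ≠ 0) :
    1 - lastTermRatio b (k + 1) =
      lastTermRatio b (k + 1) / lastTermRatio b k * (b k / b (k + 1)) := by
  obtain ⟨hb', hS'⟩ := lastTermRatio_ne_zero_iff.1 hr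
  rw [one_sub_lastTermRatio hS', lastTermRatio, lastTermRatio]
  field_simp

theorem lastTermRatio_pos [LinearOrder K] [IsStrictOrderedRing K] (hb : ∀ j ≤ k, 0 < b j) :
    0 < lastTermRatio b k :=
  div_pos (hb k le_rfl) <|
    sum_pos (fun j hj ↦ hb j (mem_range_succ_iff.1 hj)) nonempty_range_add_one

end LastTermRatio

theorem eval_bernsteinPolynomial {R : Type*} [CommRing R] (n k : ℕ) (t : R) :
    (bernsteinPolynomial R n k).eval t = n.choose k * t ^ k * (1 - t) ^ (n - k) := by
  simp [bernsteinPolynomial]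

theorem eval_bernsteinPolynomial_succ_mul {R : Type*} [CommRing R] (n k : ℕ) (t : R) :
    (bernsteinPolynomial R n (k + 1)).eval t * (((k + 1 : ℕ) : R) * (1 - t)) =
      (bernsteinPolynomial R n k).eval t * (t * ((n - k : ℕ) : R)) := by
  have hchoose : (n.choose (k + 1) : R) * ((k + 1 : ℕ) : R) = n.choose k * ((n - k : ℕ) : R) := by
    rw [← Nat.cast_mul, ← Nat.cast_mul, n.choose_succ_right_eq k]
  rcases lt_or_ge k n with hkn | hnk
  · have hpow : (1 - t) ^ (n - k) = (1 - t) ^ (n - (k + 1)) * (1 - t) := by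
      rw [← pow_succ]
      congr 1
      lia
    rw [eval_bernsteinPolynomial, eval_bernsteinPolynomial, hpow]
    linear_combination t ^ (k + 1) * (1 - t) ^ (n - (k + 1)) * (1 - t) * hchoose
  · simp [bernsteinPolynomial.eq_zero_of_lt R (Nat.lt_succ_of_le hnk), Nat.sub_eq_zero_of_le hnk]

theorem eval_bernsteinPolynomial_div_succ {K : Type*} [Field K] [CharZero K] {n k : ℕ} {t : K}
    (hb : (bernsteinPolynomial K n (k + 1)).eval t ≠ 0) :
    (bernsteinPolynomial K n k).eval t / (bernsteinPolynomial K n (k + 1)).eval t =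
      (((k + 1 : ℕ) : K) * (1 - t)) / (t * ((n - k : ℕ) : K)) := by
  have hkn : k < n := by
    by_contra! hnk
    exact hb (by simp [bernsteinPolynomial.eq_zero_of_lt K (Nat.lt_succ_of_le hnk)])
  have ht : t ≠ 0 := by
    rintro rfl
    exact hb (by simp [eval_bernsteinPolynomial])
  have hnk : ((n - k : ℕ) : K) ≠ 0 := Nat.cast_ne_zero.2 (Nat.sub_ne_zero_of_lt hkn)
  rw [div_eq_div_iff hb (mul_ne_zero ht hnk), ← eval_bernsteinPolynomial_succ_mul, mul_comm]

theorem eval_bernsteinPolynomial_pos {R : Type*} [CommRing R] [LinearOrder R]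
    [IsStrictOrderedRing R] {n k : ℕ} {t : R} (ht : t ∈ Set.Ioo (0 : R) 1) (hkn : k ≤ n) :
    0 < (bernsteinPolynomial R n k).eval t := by
  have hchoose : 0 < n.choose k := Nat.choose_pos hkn
  have ht0 : 0 < t := ht.1
  have ht1 : 0 < 1 - t := sub_pos.2 ht.2
  rw [eval_bernsteinPolynomial]
  positivity

theorem lastTermRatio_bernsteinPolynomial_pos {K : Type*} [Field K] [LinearOrder K]
    [IsStrictOrderedRing K] {n k : ℕ} {t : K} (ht : t ∈ Set.Ioo (0 : K) 1) (hkn : k ≤ n) :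
    0 < lastTermRatio (fun j ↦ (bernsteinPolynomial K n j).eval t) k :=
  lastTermRatio_pos fun _ hj ↦ eval_bernsteinPolynomial_pos ht (hj.trans hkn)

theorem bern_div_sum_eq_lastTermRatio (n k : ℕ) (t : ℝ) :
    bern n k t / ∑ j ∈ range (k + 1), bern n j t =
      lastTermRatio (fun j ↦ (bernsteinPolynomial ℝ n j).eval t) k := by
  simp only [lastTermRatio, eval_bernsteinPolynomial, bern]

theorem stmt16_general {K : Type*} [Field K] [CharZero K] (n : ℕ) (t : K) (h : ℕ → K)
    (hh : ∀ k ≤ n, h k = lastTermRatio (fun j ↦ (bernsteinPolynomial K n j).eval t) k)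
    (k : ℕ) (hk1 : 1 ≤ k) (hkn : k ≤ n) (hpred : h (k - 1) ≠ 0) (hk : h k ≠ 0) :
    1 - h k = (h k / h (k - 1)) *
      (((k : K) * (1 - t)) / (t * ((n - k + 1 : ℕ) : K))) := by
  obtain ⟨m, rfl⟩ := Nat.exists_eq_add_of_le' hk1
  have hm : n - (m + 1) + 1 = n - m := by lia
  rw [Nat.add_sub_cancel, hh m (by lia)] at hpred
  rw [hh (m + 1) hkn] at hk
  rw [Nat.add_sub_cancel, hm, hh m (by lia), hh (m + 1) hkn,
    one_sub_lastTermRatio_succ (lastTermRatio_ne_zero_iff.1 hpred).1 hk,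
    eval_bernsteinPolynomial_div_succ (lastTermRatio_ne_zero_iff.1 hk).1]

theorem stmt16 (n : ℕ) (t : ℝ) (ht : t ∈ Set.Ioo (0 : ℝ) 1)
    (h : ℕ → ℝ)
    (hh : ∀ k ≤ n, h k = bern n k t / ∑ j ∈ range (k + 1), bern n j t)
    (k : ℕ) (hk1 : 1 ≤ k) (hkn : k ≤ n) :
    1 - h k = (h k / h (k - 1)) *
      (((k : ℝ) * (1 - t)) / (t * ((n - k + 1 : ℕ) : ℝ))) := by
  simp only [bern_div_sum_eq_lastTermRatio] at hh
  have hpos : ∀ j ≤ n, 0 < h j := fun j hj ↦ hh j hj ▸ lastTermRatio_bernsteinPolynomial_pos ht hj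
  exact stmt16_general n t h hh k hk1 hkn (hpos _ (by lia)).ne' (hpos k hkn).ne'
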